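/- For every non-negative integer k, every non-negative integer n, and every j ∈ {2, 4, 5, 6}, the number of (49k+3)-colour partitions of 49n+7j+1 is divisible by 7; that is, p_{49k+3}(49n+7j+1) ≡ 0 (mod 7). -/

import Mathlib

/-- `colouredPartitions r n` is the number of `r`-colour partitions of `n`:
multisets of pairs `(m, c)` with `m` a positive integer part and `c` one of `r`
colours, whose parts (first components, with multiplicity) sum to `n`.  Such a
multiset is encoded by its multiplicity function `f : ℕ+ × Fin r →₀ ℕ`. -/
noncomputable def colouredPartitions (r n : ℕ) : ℕ :=
  Nat.card {f : ℕ+ × Fin r →₀ ℕ // (f.sum fun x m => (x.1 : ℕ) * m) = n}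

open PowerSeries Finset

instance cpFact : Fact (Nat.Prime 7) := ⟨by norm_num⟩

noncomputable abbrev CPF : PowerSeries (ZMod 7) := pentagonalSeries (ZMod 7)

noncomputable def CPE (N : ℕ) : PowerSeries (ZMod 7) := ∏ i ∈ range N, (1 - X ^ (i + 1))

lemma cp_tail (N : ℕ) (s : Finset ℕ) (hs : ∀ i ∈ s, N ≤ i) :
    (X : PowerSeries (ZMod 7)) ^ (N + 1) ∣ ∏ i ∈ s, (1 - X ^ (i + 1)) - 1 := by
  induction s using Finset.induction_on with
  | empty => simp
  | insert a s ha ih =>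
    rw [prod_insert ha]
    have h1 := ih (fun i hi => hs i (mem_insert_of_mem hi))
    have h2 : (X : PowerSeries (ZMod 7)) ^ (N + 1) ∣ X ^ (a + 1) :=
      pow_dvd_pow _ (by have := hs a (mem_insert_self _ _); omega)
    have : (1 - X ^ (a + 1)) * ∏ i ∈ s, (1 - (X : PowerSeries (ZMod 7)) ^ (i + 1)) - 1
      = (∏ i ∈ s, (1 - (X : PowerSeries (ZMod 7)) ^ (i + 1)) - 1)
        - X ^ (a + 1) * ∏ i ∈ s, (1 - (X : PowerSeries (ZMod 7)) ^ (i + 1)) := by ring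
    rw [this]
    exact dvd_sub h1 (h2.mul_right _)

lemma cp_FE (N : ℕ) : (X : PowerSeries (ZMod 7)) ^ (N + 1) ∣ CPF - CPE N := by
  rw [X_pow_dvd_iff]
  intro m hm
  obtain ⟨s0, hs0⟩ := Filter.eventually_atTop.1 (coeff_prod_one_sub_X_pow_eventually_eq (ZMod 7) m)
  have h := hs0 (s0 ∪ range N) subset_union_left
  have h2 : ∏ i ∈ s0 ∪ range N, (1 - (X : PowerSeries (ZMod 7)) ^ (i + 1))
      = CPE N * ∏ i ∈ (s0 ∪ range N) \ range N, (1 - X ^ (i + 1)) := by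
    rw [CPE, mul_comm, prod_sdiff subset_union_right]
  have h3 := cp_tail N ((s0 ∪ range N) \ range N) (by intro i hi; simp at hi; omega)
  have h4 := h3.mul_left (CPE N)
  rw [mul_sub, ← h2, mul_one, X_pow_dvd_iff] at h4
  have := h4 m hm
  rw [map_sub, h] at this
  rw [map_sub, this]

lemma cp_FE' {M N : ℕ} (h : M ≤ N + 1) : (X : PowerSeries (ZMod 7)) ^ M ∣ CPF - CPE N :=
  (pow_dvd_pow _ h).trans (cp_FE N)

noncomputable def cpg (m : ℕ) : PowerSeries (ZMod 7) := mk fun k => if m ∣ k then 1 else 0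

lemma cpg_mul (m : ℕ) (hm : 0 < m) : cpg m * (1 - X ^ m) = 1 := by
  ext n
  rw [mul_sub, mul_one, map_sub, coeff_mul_X_pow', coeff_one]
  simp only [cpg, coeff_mk]
  by_cases h : m ≤ n
  · have : (m ∣ n - m ↔ m ∣ n) := by
      rw [Nat.dvd_sub_iff_left h dvd_rfl]
    simp [h, this, show n ≠ 0 by omega]
  · by_cases h0 : n = 0
    · subst h0; simp [hm.ne']
    · have : ¬ m ∣ n := fun hd => h (Nat.le_of_dvd (by omega) hd)
      simp [h, h0, this]

noncomputable def cpEquiv (r n : ℕ) (s : Finset (ℕ+ × Fin r)) (hs : ∀ p : ℕ+ × Fin r, (p.1 : ℕ) ≤ n → p ∈ s) :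
    {f : ℕ+ × Fin r →₀ ℕ // (f.sum fun x m => (x.1 : ℕ) * m) = n} ≃
    {l : ℕ+ × Fin r →₀ ℕ // l ∈ (finsuppAntidiag s n).filter (fun l => ∀ i ∈ s, (i.1 : ℕ) ∣ l i)} where
  toFun f := ⟨Finsupp.onFinset f.1.support (fun i => (i.1 : ℕ) * f.1 i) (by
      intro a ha; simp only [ne_eq, mul_eq_zero, not_or] at ha; simpa using ha.2), by
    have hsub : f.1.support ⊆ s := by
      intro p hp
      apply hs
      have h := f.2
      rw [Finsupp.sum] at h
      have h1 := single_le_sum (f := fun x : ℕ+ × Fin r => (x.1 : ℕ) * f.1 x) (fun i _ => Nat.zero_le _) hp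
      have h2 : 0 < f.1 p := Nat.pos_of_ne_zero (by simpa using hp)
      nlinarith [p.1.pos]
    rw [mem_filter, mem_finsuppAntidiag]
    refine ⟨⟨?_, ?_⟩, ?_⟩
    · change ∑ i ∈ s, (i.1 : ℕ) * f.1 i = n
      refine Eq.trans ?_ f.2
      rw [Finsupp.sum]
      symm
      apply sum_subset hsub
      intro x _ hx
      simp at hx
      simp [hx]
    · exact (Finsupp.support_onFinset_subset).trans hsub
    · intro i _; simp⟩
  invFun l := ⟨Finsupp.onFinset l.1.support (fun i => l.1 i / (i.1 : ℕ)) (by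
      intro a ha; simp only [ne_eq] at ha
      simp only [Finsupp.mem_support_iff]
      intro h; rw [h] at ha; simp at ha), by
    have hl := l.2
    rw [mem_filter, mem_finsuppAntidiag] at hl
    obtain ⟨⟨h1, h2⟩, h3⟩ := hl
    rw [Finsupp.onFinset_sum _ (by simp)]
    refine Eq.trans ?_ h1
    calc _ = ∑ i ∈ l.1.support, l.1 i := sum_congr rfl (fun i hi => Nat.mul_div_cancel' (h3 i (h2 hi)))
      _ = _ := by
        apply sum_subset h2
        intro x _ hx
        simpa using hx⟩
  left_inv f := by
    ext i
    simp
  right_inv l := by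
    have hl := l.2
    rw [mem_filter, mem_finsuppAntidiag] at hl
    obtain ⟨⟨h1, h2⟩, h3⟩ := hl
    ext i
    simp only [Finsupp.onFinset_apply]
    by_cases hi : i ∈ s
    · exact Nat.mul_div_cancel' (h3 i hi)
    · have : l.1 i = 0 := by
        by_contra h
        exact hi (h2 (by simpa using h))
      simp [this]

lemma cp_coeff (r n N : ℕ) (h : n ≤ N) :
    (colouredPartitions r n : ZMod 7) = coeff n ((∏ i ∈ range N, cpg (i + 1)) ^ r) := by
  classical
  set s : Finset (ℕ+ × Fin r) := ((range N).image Nat.succPNat) ×ˢ univ with hsdef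
  have hs : ∀ p : ℕ+ × Fin r, (p.1 : ℕ) ≤ n → p ∈ s := by
    intro p hp
    simp only [hsdef, mem_product, mem_image, mem_range, mem_univ, and_true]
    refine ⟨p.1.natPred, ?_, PNat.succPNat_natPred _⟩
    have := PNat.natPred_add_one p.1
    omega
  have hprod : (∏ i ∈ range N, cpg (i + 1)) ^ r = ∏ p ∈ s, cpg p.1 := by
    rw [hsdef, prod_product]
    simp only [prod_const, card_univ, Fintype.card_fin]
    rw [prod_image (fun a _ b _ hab => Nat.succPNat_injective hab), prod_pow]
    simp
  rw [hprod, coeff_prod]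
  simp only [cpg, coeff_mk, prod_boole]
  rw [sum_boole, colouredPartitions, Nat.card_congr (cpEquiv r n s hs), Nat.card_eq_fintype_card, Fintype.card_coe]

lemma cp_gE (N : ℕ) : (∏ i ∈ range N, cpg (i + 1)) * CPE N = 1 := by
  rw [CPE, ← prod_mul_distrib]
  exact prod_eq_one (fun i _ => cpg_mul _ (by omega))

lemma cp_gen (r : ℕ) : (mk fun n => (colouredPartitions r n : ZMod 7)) * CPF ^ r = 1 := by
  ext n
  have h1 : (X : PowerSeries (ZMod 7)) ^ (n + 1) ∣
      (mk fun n => (colouredPartitions r n : ZMod 7)) - (∏ i ∈ range n, cpg (i + 1)) ^ r := by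
    rw [X_pow_dvd_iff]
    intro m hm
    rw [map_sub, coeff_mk, cp_coeff r m n (by omega), sub_self]
  have h2 : (X : PowerSeries (ZMod 7)) ^ (n + 1) ∣ CPF ^ r - CPE n ^ r :=
    (cp_FE n).trans (sub_dvd_pow_sub_pow _ _ _)
  have h3 : (mk fun n => (colouredPartitions r n : ZMod 7)) * CPF ^ r - 1 =
     ((mk fun n => (colouredPartitions r n : ZMod 7)) - (∏ i ∈ range n, cpg (i + 1)) ^ r) * CPF ^ r
     + (∏ i ∈ range n, cpg (i + 1)) ^ r * (CPF ^ r - CPE n ^ r) := by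
    have : (∏ i ∈ range n, cpg (i + 1)) ^ r * CPE n ^ r = 1 := by
      rw [← mul_pow, cp_gE, one_pow]
    linear_combination this
  have h4 := dvd_add (h1.mul_right (CPF ^ r)) (h2.mul_left ((∏ i ∈ range n, cpg (i + 1)) ^ r))
  rw [← h3, X_pow_dvd_iff] at h4
  have := h4 n (by omega)
  rw [map_sub] at this
  exact sub_eq_zero.1 this

lemma cp_F0 : CPF ≠ 0 := by
  intro h
  have := cp_gen 1
  rw [h] at this
  simp at this

lemma cp_frob (f : PowerSeries (ZMod 7)) : f ^ 7 = expand 7 (by norm_num) f := by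
  have := MvPowerSeries.map_frobenius_expand (σ := Unit) (R := ZMod 7) 7 (by norm_num) (f := f)
  rw [ZMod.frobenius_zmod, MvPowerSeries.map_id] at this
  exact this.symm

noncomputable def cpD (j : ℕ) (f : PowerSeries (ZMod 7)) : PowerSeries (ZMod 7) :=
  mk fun n => coeff (7 * n + j) f

lemma cpD_mul (j : ℕ) (hj : j < 7) (f g : PowerSeries (ZMod 7)) :
    cpD j (f * g ^ 7) = cpD j f * g := by
  ext n
  rw [cp_frob, cpD, coeff_mk, mul_comm f, mul_comm _ g, coeff_mul, coeff_mul]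
  simp only [cpD, coeff_mk, coeff_expand]
  symm
  apply sum_of_injOn (fun p : ℕ × ℕ => (7 * p.1, 7 * p.2 + j))
  · intro a _ b _ h
    simp only [Prod.mk.injEq] at h
    ext <;> omega
  · intro a ha
    simp at ha ⊢
    omega
  · intro p hp hp2
    rw [if_neg, zero_mul]
    rintro ⟨c, hc⟩
    simp at hp
    apply hp2
    refine ⟨(c, n - c), ?_, ?_⟩
    · simp; omega
    · ext <;> simp <;> omega
  · intro p hp
    simp

noncomputable def cpI (n : ℕ) : PowerSeries (ZMod 7) := ∏ i ∈ range n, cpg (i + 1)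

lemma cpIE (n : ℕ) : cpI n * CPE n = 1 := cp_gE n

lemma cpI_succ (n : ℕ) : cpI n = (1 - X ^ (n + 1)) * cpI (n + 1) := by
  have h := cpg_mul (n + 1) (by omega)
  rw [cpI, cpI, prod_range_succ]
  linear_combination (-∏ i ∈ range n, cpg (i + 1)) * h

lemma cpE_succ (n : ℕ) : CPE (n + 1) = CPE n * (1 - X ^ (n + 1)) := by
  rw [CPE, CPE, prod_range_succ]

noncomputable def cpP (y : PowerSeries (ZMod 7)) (N : ℕ) : Polynomial (PowerSeries (ZMod 7)) :=
  ∏ i ∈ range N, (Polynomial.C y - Polynomial.X * Polynomial.C (X ^ i))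

lemma cpP_succ (y : PowerSeries (ZMod 7)) (N : ℕ) :
    cpP y (N + 1) = Polynomial.C y * cpP y N - Polynomial.C (X ^ N) * (Polynomial.X * cpP y N) := by
  rw [cpP, prod_range_succ, ← cpP]; ring

lemma cpP_coeff_gt (y : PowerSeries (ZMod 7)) (N a : ℕ) (h : N < a) : (cpP y N).coeff a = 0 := by
  induction N generalizing a with
  | zero => simp [cpP, Polynomial.coeff_one, show a ≠ 0 by omega]
  | succ N ih =>
    obtain ⟨a, rfl⟩ : ∃ a', a = a' + 1 := ⟨a - 1, by omega⟩
    rw [cpP_succ, Polynomial.coeff_sub, Polynomial.coeff_C_mul, Polynomial.coeff_C_mul,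
      Polynomial.coeff_X_mul, ih _ (by omega), ih _ (by omega)]
    simp

lemma cpP_coeff (y : PowerSeries (ZMod 7)) (N a b : ℕ) (h : a + b = N) :
    (cpP y N).coeff a = (-1) ^ a * X ^ (a.choose 2) * y ^ b * CPE N * cpI a * cpI b := by
  induction N generalizing a b with
  | zero =>
    obtain ⟨rfl, rfl⟩ : a = 0 ∧ b = 0 := by omega
    simp [cpP, CPE, cpI]
  | succ N ih =>
    rw [cpP_succ, Polynomial.coeff_sub, Polynomial.coeff_C_mul, Polynomial.coeff_C_mul]
    rcases a with _ | a
    · rw [Polynomial.mul_coeff_zero, Polynomial.coeff_X_zero, ih 0 N (by omega)]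
      obtain rfl : b = N + 1 := by omega
      have h1 := cpIE N
      have h2 := cpIE (N + 1)
      have h3 : cpI 0 = 1 := by simp [cpI]
      simp only [h3, pow_zero, Nat.choose_zero_succ]
      linear_combination y ^ (N + 1) * h1 - y ^ (N + 1) * h2
    · rw [Polynomial.coeff_X_mul]
      rcases b with _ | b
      · obtain rfl : a = N := by omega
        rw [cpP_coeff_gt _ _ _ (by omega), ih a 0 (by omega)]
        have h1 := cpIE a
        have h2 := cpIE (a + 1)
        have h3 : cpI 0 = 1 := by simp [cpI]
        have h4 : (a + 1).choose 2 = a + a.choose 2 := by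
          rw [Nat.choose_succ_succ' a 1]; simp
        rw [h3, h4, pow_add, pow_succ (-1)]
        linear_combination (-X ^ a * (-1) ^ a * X ^ (a.choose 2)) * h1 + (X ^ a * (-1) ^ a * X ^ (a.choose 2)) * h2
      · rw [ih (a + 1) b (by omega), ih a (b + 1) (by omega), cpI_succ b, cpI_succ a, cpE_succ]
        have h4 : (a + 1).choose 2 = a + a.choose 2 := by
          rw [Nat.choose_succ_succ' a 1]; simp
        obtain rfl : N = a + b + 1 := by omega
        rw [h4]
        ring

lemma cpP_eval (y z : PowerSeries (ZMod 7)) (N : ℕ) :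
    (cpP y N).eval z = ∏ i ∈ range N, (y - z * X ^ i) := by
  rw [cpP, Polynomial.eval_prod]; simp

lemma cp_prod1 (n : ℕ) : ∏ i ∈ range n, ((X : PowerSeries (ZMod 7)) ^ n - X ^ i)
    = (-1) ^ n * X ^ (n.choose 2) * CPE n := by
  have h0 : ∏ i ∈ range n, ((X : PowerSeries (ZMod 7)) ^ n - X ^ i)
      = ∏ i ∈ range n, ((-1) * X ^ i * (1 - X ^ (n - 1 - i + 1))) := by
    apply prod_congr rfl
    intro i hi
    rw [mem_range] at hi
    have : (X : PowerSeries (ZMod 7)) ^ n = X ^ i * X ^ (n - 1 - i + 1) := by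
      rw [← pow_add]; congr 1; omega
    rw [this]; ring
  rw [h0, prod_mul_distrib, prod_mul_distrib, prod_const, card_range, prod_pow_eq_pow_sum,
    Finset.sum_range_id, Nat.choose_two_right, prod_range_reflect (fun i => (1 - (X : PowerSeries (ZMod 7)) ^ (i + 1))) n]
  rfl

lemma cp_prod2 (n : ℕ) : ∏ i ∈ range n, ((X : PowerSeries (ZMod 7)) ^ n - X ^ (n + 1 + i))
    = X ^ (n * n) * CPE n := by
  have h : (X : PowerSeries (ZMod 7)) ^ (n * n) = ∏ _i ∈ range n, X ^ n := by
    rw [prod_const, card_range, pow_mul]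
  rw [CPE, h, ← prod_mul_distrib]
  apply prod_congr rfl
  intro i _
  ring

lemma cpP_eval_one (n : ℕ) : (cpP (X ^ n) (2 * n + 1)).eval 1 = 0 := by
  rw [cpP_eval]
  apply prod_eq_zero (i := n) (by simp; omega)
  simp

lemma cpP_deriv_one (n : ℕ) : (cpP (X ^ n) (2 * n + 1)).derivative.eval 1
    = -((-1) ^ n * X ^ (n.choose 2 + n * (n + 1)) * CPE n ^ 2) := by
  have h : cpP (X ^ n) (2 * n + 1) = cpP (X ^ n) n *
     (∏ i ∈ range n, (Polynomial.C (X ^ n) - Polynomial.X * Polynomial.C (X ^ (n + 1 + i)))) *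
     (Polynomial.C (X ^ n) - Polynomial.X * Polynomial.C (X ^ n)) := by
    rw [cpP, show 2 * n + 1 = (n + 1) + n by ring, prod_range_add, prod_range_succ, ← cpP]
    ring
  rw [h, Polynomial.derivative_mul]
  simp only [Polynomial.eval_add, Polynomial.eval_mul, Polynomial.derivative_sub, Polynomial.derivative_C,
    Polynomial.derivative_mul, Polynomial.derivative_X, Polynomial.eval_sub, Polynomial.eval_C,
    Polynomial.eval_X, Polynomial.eval_prod, cpP_eval, Polynomial.eval_neg, one_mul, sub_self, mul_zero, add_zero, zero_add, zero_sub]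
  rw [cp_prod1, cp_prod2]
  ring

lemma cp_sum_eq (n : ℕ) :
    ∑ a ∈ range (2 * n + 2), (2 * (a : PowerSeries (ZMod 7)) - 2 * (n : PowerSeries (ZMod 7)) - 1) * (cpP (X ^ n) (2 * n + 1)).coeff a
    = -(2 * ((-1) ^ n * X ^ (n.choose 2 + n * (n + 1)) * CPE n ^ 2)) := by
  have hd : (cpP (X ^ n) (2 * n + 1)).natDegree < 2 * n + 2 := by
    rw [Nat.lt_succ_iff, Polynomial.natDegree_le_iff_coeff_eq_zero]
    intro N hN
    exact cpP_coeff_gt _ _ _ hN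
  have h1 := cpP_eval_one n
  have h2 := cpP_deriv_one n
  rw [Polynomial.eval_eq_sum_range' hd] at h1
  rw [Polynomial.derivative_eval, Polynomial.sum_over_range' _ (by simp) _ hd] at h2
  simp only [one_pow, mul_one] at h1 h2
  have : ∀ a ∈ range (2 * n + 2), (2 * (a : PowerSeries (ZMod 7)) - 2 * (n : PowerSeries (ZMod 7)) - 1) * (cpP (X ^ n) (2 * n + 1)).coeff a
    = 2 * ((cpP (X ^ n) (2 * n + 1)).coeff a * a) - (2 * (n : PowerSeries (ZMod 7)) + 1) * (cpP (X ^ n) (2 * n + 1)).coeff a := by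
    intro a _; ring
  rw [sum_congr rfl this, sum_sub_distrib, ← mul_sum, ← mul_sum, h1, h2]
  ring

/-- the exponent -/
def cpT (n a : ℕ) : ℕ := (((a : ℤ) - n) * (a - n - 1) / 2).toNat

lemma cpT_spec (n a : ℕ) : 2 * (cpT n a : ℤ) = ((a : ℤ) - n) * (a - n - 1) := by
  have h0 : 0 ≤ ((a : ℤ) - n) * (a - n - 1) := by
    rcases le_or_gt (a : ℤ) n with h | h <;> nlinarith
  have he : Even (((a : ℤ) - n) * (a - n - 1)) := Int.even_mul_pred_self _
  obtain ⟨c, hc⟩ := he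
  rw [cpT, hc]
  rw [hc] at h0
  omega

lemma cpT_choose (n a b : ℕ) (h : a + b = 2 * n + 1) :
    a.choose 2 + n * b = n.choose 2 + n * (n + 1) + cpT n a := by
  have h1 := cpT_spec n a
  have h2 : ∀ m : ℕ, 2 * (m.choose 2 : ℤ) = m * (m - 1) := by
    intro m
    induction m with
    | zero => simp
    | succ m ih =>
      rw [Nat.choose_succ_succ' m 1]; push_cast; simp; linarith
  have h3 := h2 a
  have h4 := h2 n
  have h5 : (b : ℤ) = 2 * n + 1 - a := by omega
  zify
  rw [h5]
  nlinarith

lemma cp_sum_eq2 (n : ℕ) :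
    ∑ a ∈ range (2 * n + 2), (2 * (a : PowerSeries (ZMod 7)) - 2 * (n : PowerSeries (ZMod 7)) - 1) *
      ((-1) ^ a * X ^ (cpT n a) * CPE (2 * n + 1) * cpI a * cpI (2 * n + 1 - a))
    = -(2 * ((-1) ^ n * CPE n ^ 2)) := by
  have h := cp_sum_eq n
  have hX : (X : PowerSeries (ZMod 7)) ^ (n.choose 2 + n * (n + 1)) ≠ 0 := pow_ne_zero _ X_ne_zero
  apply mul_left_cancel₀ hX
  rw [mul_sum]
  refine Eq.trans (sum_congr rfl ?_) (h.trans (by ring))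
  intro a ha
  rw [mem_range] at ha
  rw [cpP_coeff _ _ a (2 * n + 1 - a) (by omega), ← pow_mul]
  have h1 := cpT_choose n a (2 * n + 1 - a) (by omega)
  have h2 : (X : PowerSeries (ZMod 7)) ^ (a.choose 2) * X ^ (n * (2 * n + 1 - a))
      = X ^ (n.choose 2 + n * (n + 1)) * X ^ (cpT n a) := by
    rw [← pow_add, h1, pow_add]
  linear_combination (-(2 * (a : PowerSeries (ZMod 7)) - 2 * (n : PowerSeries (ZMod 7)) - 1) * (-1) ^ a * CPE (2 * n + 1) * cpI a * cpI (2 * n + 1 - a)) * h2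

lemma cp_IF (M n : ℕ) (h : M ≤ n + 1) : (X : PowerSeries (ZMod 7)) ^ M ∣ cpI n * CPF - 1 := by
  have h1 := (cp_FE' h).mul_left (cpI n)
  have h2 := cpIE n
  rwa [mul_sub, h2] at h1

lemma cp_jac1 (N n : ℕ) (hn : 2 * N + 3 ≤ n) :
    (X : PowerSeries (ZMod 7)) ^ (N + 1) ∣ 2 * CPF ^ 3 -
      ∑ a ∈ range (2 * n + 2), (2 * (n : PowerSeries (ZMod 7)) + 1 - 2 * (a : PowerSeries (ZMod 7))) * (-1) ^ (n + a) * X ^ (cpT n a) := by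
  have h := cp_sum_eq2 n
  have hterm : ∀ a ∈ range (2 * n + 2), (X : PowerSeries (ZMod 7)) ^ (N + 1) ∣
      ((2 * (a : PowerSeries (ZMod 7)) - 2 * (n : PowerSeries (ZMod 7)) - 1) *
      ((-1) ^ a * X ^ (cpT n a) * CPE (2 * n + 1) * cpI a * cpI (2 * n + 1 - a))) * CPF
      - (2 * (a : PowerSeries (ZMod 7)) - 2 * (n : PowerSeries (ZMod 7)) - 1) * (-1) ^ a * X ^ (cpT n a) := by
    intro a ha
    rw [mem_range] at ha
    by_cases hT : N + 1 ≤ cpT n a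
    · have h1 : (X : PowerSeries (ZMod 7)) ^ (N + 1) ∣ X ^ (cpT n a) := pow_dvd_pow _ hT
      apply dvd_sub
      · apply Dvd.dvd.mul_right; apply Dvd.dvd.mul_left; apply Dvd.dvd.mul_right
        apply Dvd.dvd.mul_right; apply Dvd.dvd.mul_right; exact h1.mul_left _
      · exact h1.mul_left _
    · have hs := cpT_spec n a
      have hT' : (cpT n a : ℤ) ≤ N := by omega
      have ha1 : (n : ℤ) - N - 1 ≤ a := by nlinarith
      have ha2 : (a : ℤ) ≤ n + N + 2 := by nlinarith
      have e1 := cp_IF (N + 1) a (by omega)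
      have e2 := cp_IF (N + 1) (2 * n + 1 - a) (by omega)
      have e3 := cp_FE' (M := N + 1) (N := 2 * n + 1) (by omega)
      obtain ⟨u1, hu1⟩ := e1
      obtain ⟨u2, hu2⟩ := e2
      obtain ⟨u3, hu3⟩ := e3
      have key : CPE (2 * n + 1) * cpI a * cpI (2 * n + 1 - a) * CPF - 1
        = X ^ (N + 1) * (u1 * (cpI (2 * n + 1 - a) * CPF) + u2 - u3 * cpI a * cpI (2 * n + 1 - a) * CPF) := by
        linear_combination (cpI (2 * n + 1 - a) * CPF) * hu1 + hu2 - (cpI a * cpI (2 * n + 1 - a) * CPF) * hu3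
      have k2 : (X : PowerSeries (ZMod 7)) ^ (N + 1) ∣ CPE (2 * n + 1) * cpI a * cpI (2 * n + 1 - a) * CPF - 1 := ⟨_, key⟩
      have := k2.mul_left ((2 * (a : PowerSeries (ZMod 7)) - 2 * (n : PowerSeries (ZMod 7)) - 1) * (-1) ^ a * X ^ (cpT n a))
      convert this using 1
      ring
  have hs := dvd_sum hterm
  rw [sum_sub_distrib, ← sum_mul, h] at hs
  have h3 : (X : PowerSeries (ZMod 7)) ^ (N + 1) ∣ CPF ^ 2 - CPE n ^ 2 :=
    (cp_FE' (by omega)).trans (sub_dvd_pow_sub_pow _ _ _)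
  have h4 := dvd_sub (h3.mul_left (2 * CPF)) (hs.mul_left ((-1) ^ n))
  convert h4 using 1
  have hone : (-1 : PowerSeries (ZMod 7)) ^ n * (-1) ^ n = 1 := by
    rw [← mul_pow]; simp
  rw [mul_sub ((-1) ^ n), mul_sum]
  have : ∀ a ∈ range (2 * n + 2), (2 * (n : PowerSeries (ZMod 7)) + 1 - 2 * (a : PowerSeries (ZMod 7))) * (-1) ^ (n + a) * X ^ (cpT n a)
     = -((-1) ^ n * ((2 * (a : PowerSeries (ZMod 7)) - 2 * (n : PowerSeries (ZMod 7)) - 1) * (-1) ^ a * X ^ (cpT n a))) := by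
    intro a _; ring
  rw [sum_congr rfl this, sum_neg_distrib]
  linear_combination (-2 * CPE n ^ 2 * CPF) * hone

def cpδ (y : ℤ) : ZMod 7 := if y % 4 = 1 then 1 else -1
def cpε (x : ℤ) : ZMod 7 := if x % 12 = 11 then 1 else -1

lemma cp_negpow_even (n : ℕ) (h : n % 2 = 0) : (-1 : ZMod 7) ^ n = 1 :=
  Even.neg_one_pow (Nat.even_iff.2 h)
lemma cp_negpow_odd (n : ℕ) (h : n % 2 = 1) : (-1 : ZMod 7) ^ n = -1 :=
  Odd.neg_one_pow (Nat.odd_iff.2 h)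

lemma cp_jac2 (N : ℕ) (B : ℤ) (hB : 8 * N + 1 ≤ B) :
    2 * coeff N (CPF ^ 3) = ∑ y ∈ (Icc (-B) B).filter (fun y : ℤ => y % 2 = 1 ∧ y ^ 2 = 8 * N + 1), cpδ y * (y : ZMod 7) := by
  set n := 2 * N + 3 with hn
  have h := cp_jac1 N n le_rfl
  rw [X_pow_dvd_iff] at h
  have h := h N (by omega)
  have h2 : ∀ a ∈ range (2 * n + 2), (2 * (n : PowerSeries (ZMod 7)) + 1 - 2 * (a : PowerSeries (ZMod 7))) * (-1) ^ (n + a) * X ^ (cpT n a)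
     = C ((2 * (n : ZMod 7) + 1 - 2 * (a : ZMod 7)) * (-1) ^ (n + a)) * X ^ (cpT n a) := by
    intro a _
    have h2c : (C (2 : ZMod 7) : PowerSeries (ZMod 7)) = 2 := map_ofNat C 2
    simp [h2c]
  have h0 : coeff N (2 * CPF ^ 3) = 2 * coeff N (CPF ^ 3) := by
    rw [two_mul, map_add, two_mul]
  rw [sum_congr rfl h2, map_sub, sub_eq_zero, h0, map_sum] at h
  rw [h]
  simp only [coeff_C_mul, coeff_X_pow, mul_ite, mul_one, mul_zero]
  rw [← sum_filter]
  apply sum_nbij' (fun a : ℕ => (2 * n + 1 - 2 * a : ℤ)) (fun y : ℤ => ((2 * n + 1 - y) / 2).toNat)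
  · intro a ha
    rw [mem_filter, mem_range] at ha
    have hs := cpT_spec n a
    rw [← ha.2] at hs
    have h8 : (2 * n + 1 - 2 * a : ℤ) ^ 2 = 8 * N + 1 := by nlinarith
    rw [mem_filter, mem_Icc]
    refine ⟨⟨by nlinarith, by nlinarith⟩, by omega, h8⟩
  · intro y hy
    rw [mem_filter, mem_Icc] at hy
    obtain ⟨-, hy1, hy2⟩ := hy
    obtain ⟨z, rfl⟩ : ∃ z, y = 2 * z + 1 := ⟨y / 2, by omega⟩
    have hz1 : z ≤ 2 * N := by nlinarith
    have hz2 : -(2 * N + 1) ≤ z := by nlinarith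
    rw [mem_filter, mem_range]
    have e : (((2 * n + 1 - (2 * z + 1)) / 2).toNat : ℤ) = n - z := by omega
    have hs := cpT_spec n (((2 * n + 1 - (2 * z + 1) : ℤ) / 2).toNat)
    rw [e] at hs
    refine ⟨by omega, ?_⟩
    zify
    nlinarith
  · intro a ha
    rw [mem_filter, mem_range] at ha
    omega
  · intro y hy
    rw [mem_filter, mem_Icc] at hy
    obtain ⟨-, hy1, hy2⟩ := hy
    obtain ⟨z, rfl⟩ : ∃ z, y = 2 * z + 1 := ⟨y / 2, by omega⟩
    have hz1 : z ≤ 2 * N := by nlinarith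
    have hz2 : -(2 * N + 1) ≤ z := by nlinarith
    omega
  · intro a ha
    rw [cpδ]
    push_cast
    rcases Nat.mod_two_eq_zero_or_one (n + a) with h | h
    · rw [cp_negpow_even _ h, if_pos (by omega)]; ring
    · rw [cp_negpow_odd _ h, if_neg (by omega)]; ring

lemma cp_pent (N : ℕ) (B : ℤ) (hB : 24 * N + 1 ≤ B) :
    coeff N CPF = ∑ x ∈ (Icc (-B) B).filter (fun x : ℤ => x % 6 = 5 ∧ x ^ 2 = 24 * N + 1), cpε x := by
  by_cases h : N ∈ Set.range pentagonal
  · obtain ⟨k, rfl⟩ := h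
    rw [coeff_pentagonalSeries_pentagonal]
    have hk := two_mul_natCast_pentagonal k
    have hk2 : (6 * k - 1) ^ 2 = 24 * (pentagonal k : ℤ) + 1 := by nlinarith
    rw [sum_eq_single (6 * k - 1)]
    · rcases Int.even_or_odd k with he | ho
      · rw [Int.negOnePow_even _ he, cpε, if_pos]
        · simp
        · obtain ⟨c, rfl⟩ := he; omega
      · rw [Int.negOnePow_odd _ ho, cpε, if_neg]
        · simp
        · obtain ⟨c, rfl⟩ := ho; omega
    · intro x hx hne
      rw [mem_filter] at hx
      exfalso
      have h1 : (x - (6 * k - 1)) * (x + (6 * k - 1)) = 0 := by nlinarith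
      rcases mul_eq_zero.1 h1 with h | h <;> omega
    · intro hx
      exfalso
      apply hx
      rw [mem_filter, mem_Icc]
      refine ⟨⟨by nlinarith, by nlinarith⟩, by omega, hk2⟩
  · rw [coeff_pentagonalSeries_eq_zero _ h, sum_eq_zero]
    intro x hx
    exfalso
    rw [mem_filter] at hx
    apply h
    refine ⟨(x + 1) / 6, ?_⟩
    obtain ⟨k, rfl⟩ : ∃ k, x = 6 * k - 1 := ⟨(x + 1) / 6, by omega⟩
    rw [show (6 * k - 1 + 1) / 6 = k by omega]
    have hk := two_mul_natCast_pentagonal k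
    zify
    nlinarith

noncomputable def cpS (M : ℕ) : Finset (ℤ × ℤ) :=
  ((Icc (-(M : ℤ)) M) ×ˢ (Icc (-(M : ℤ)) M)).filter
    (fun p => p.1 % 6 = 5 ∧ p.2 % 2 = 1 ∧ p.1 ^ 2 + 3 * p.2 ^ 2 = M)

lemma cpS_mem (M : ℕ) (p : ℤ × ℤ) :
    p ∈ cpS M ↔ p.1 % 6 = 5 ∧ p.2 % 2 = 1 ∧ p.1 ^ 2 + 3 * p.2 ^ 2 = M := by
  rw [cpS, mem_filter, mem_product, mem_Icc, mem_Icc]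
  refine ⟨fun h => h.2, fun h => ⟨⟨⟨?_, ?_⟩, ?_, ?_⟩, h⟩⟩ <;> nlinarith [h.2.2, sq_nonneg (p.1 - 1), sq_nonneg (p.1 + 1), sq_nonneg (p.2 - 1), sq_nonneg (p.2 + 1), sq_nonneg p.1, sq_nonneg p.2]

def cpw (p : ℤ × ℤ) : ZMod 7 := cpε p.1 * (cpδ p.2 * (p.2 : ZMod 7))

lemma cp_sq24 (x : ℤ) (h : x % 6 = 5) : ∃ a : ℕ, x ^ 2 = 24 * a + 1 := by
  obtain ⟨k, rfl⟩ : ∃ k, x = 6 * k - 1 := ⟨(x + 1) / 6, by omega⟩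
  have hk := two_mul_natCast_pentagonal k
  exact ⟨pentagonal k, by nlinarith⟩

lemma cp_sq8 (y : ℤ) (h : y % 2 = 1) : ∃ b : ℕ, y ^ 2 = 8 * b + 1 := by
  obtain ⟨k, rfl⟩ : ∃ k, y = 2 * k - 1 := ⟨(y + 1) / 2, by omega⟩
  obtain ⟨c, hc⟩ := Int.even_mul_pred_self k
  refine ⟨c.toNat, ?_⟩
  have h0 : 0 ≤ k * (k - 1) := by
    rcases le_or_gt k 0 with h | h <;> nlinarith
  have : (c.toNat : ℤ) = c := by omega
  rw [this]; nlinarith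

lemma cp_F4 (N : ℕ) : 2 * coeff N (CPF ^ 4) = ∑ p ∈ cpS (24 * N + 4), cpw p := by
  set B : ℤ := 24 * N + 4 with hB
  have h1 : 2 * coeff N (CPF ^ 4) = ∑ q ∈ HasAntidiagonal.antidiagonal N, ∑ p ∈
      ((Icc (-B) B).filter (fun x : ℤ => x % 6 = 5 ∧ x ^ 2 = 24 * q.1 + 1)) ×ˢ
      ((Icc (-B) B).filter (fun y : ℤ => y % 2 = 1 ∧ y ^ 2 = 8 * q.2 + 1)), cpw p := by
    rw [show CPF ^ 4 = CPF * CPF ^ 3 by ring, coeff_mul, mul_sum]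
    apply sum_congr rfl
    intro q hq
    rw [HasAntidiagonal.mem_antidiagonal] at hq
    rw [mul_left_comm, cp_jac2 q.2 B (by omega), cp_pent q.1 B (by omega), sum_mul_sum, sum_product]
    rfl
  rw [h1, ← sum_fiberwise_of_maps_to (t := HasAntidiagonal.antidiagonal N)
    (g := fun p : ℤ × ℤ => ((p.1 ^ 2 / 24).toNat, (p.2 ^ 2 / 8).toNat))]
  · apply sum_congr rfl
    intro q hq
    rw [HasAntidiagonal.mem_antidiagonal] at hq
    apply sum_congr _ (fun _ _ => rfl)
    ext p
    rw [mem_filter, cpS_mem, mem_product, mem_filter, mem_filter, mem_Icc, mem_Icc, Prod.ext_iff]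
    constructor
    · rintro ⟨⟨-, hx1, hx2⟩, -, hy1, hy2⟩
      refine ⟨⟨hx1, hy1, ?_⟩, ?_, ?_⟩
      · push_cast; omega
      · simp only; omega
      · simp only; omega
    · rintro ⟨⟨hx, hy, h⟩, ha, hb⟩
      obtain ⟨a, ha'⟩ := cp_sq24 _ hx
      obtain ⟨b, hb'⟩ := cp_sq8 _ hy
      simp only at ha hb
      push_cast at h
      have hx2 : p.1 ^ 2 = 24 * q.1 + 1 := by omega
      have hy2 : p.2 ^ 2 = 8 * q.2 + 1 := by omega
      refine ⟨⟨⟨by nlinarith, by nlinarith⟩, hx, hx2⟩, ⟨by nlinarith, by nlinarith⟩, hy, hy2⟩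
  · intro p hp
    rw [cpS_mem] at hp
    obtain ⟨hx, hy, h⟩ := hp
    obtain ⟨a, ha'⟩ := cp_sq24 _ hx
    obtain ⟨b, hb'⟩ := cp_sq8 _ hy
    rw [HasAntidiagonal.mem_antidiagonal]
    push_cast at h
    simp only
    omega

lemma cp_split (M : ℕ) : ∑ p ∈ cpS (7 * M), cpw p =
    ∑ p ∈ (cpS (7 * M)).filter (fun p => (7 : ℤ) ∣ p.1 + 2 * p.2), cpw p +
    ∑ p ∈ (cpS (7 * M)).filter (fun p => (7 : ℤ) ∣ p.1 - 2 * p.2), cpw p := by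
  rw [sum_filter, sum_filter, ← sum_add_distrib]
  apply sum_congr rfl
  intro p hp
  rw [cpS_mem] at hp
  have h7 : (7 : ℤ) ∣ (p.1 + 2 * p.2) * (p.1 - 2 * p.2) := by
    refine ⟨M - p.2 ^ 2, ?_⟩
    have := hp.2.2
    push_cast at this
    linarith
  have hpr : Prime (7 : ℤ) := by norm_num
  by_cases h1 : (7 : ℤ) ∣ p.1 + 2 * p.2
  · by_cases h2 : (7 : ℤ) ∣ p.1 - 2 * p.2
    · have : (7 : ℤ) ∣ p.2 := by omega
      have h0 : (p.2 : ZMod 7) = 0 := (ZMod.intCast_zmod_eq_zero_iff_dvd p.2 7).2 this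
      simp [cpw, h0]
    · simp [h1, h2]
  · have h2 := (hpr.dvd_or_dvd h7).resolve_left h1
    simp [h1, h2]

lemma cp_phi1 (M : ℕ) :
    ∑ p ∈ (cpS (7 * M)).filter (fun p => (7 : ℤ) ∣ p.1 + 2 * p.2), cpw p
    = ∑ p ∈ cpS M, cpw (3 * p.2 - 2 * p.1, p.1 + 2 * p.2) := by
  symm
  apply sum_nbij' (fun p : ℤ × ℤ => (3 * p.2 - 2 * p.1, p.1 + 2 * p.2))
    (fun p : ℤ × ℤ => ((-2 * p.1 + 3 * p.2) / 7, (p.1 + 2 * p.2) / 7))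
  · rintro ⟨u, v⟩ hp
    rw [cpS_mem] at hp
    rw [mem_filter, cpS_mem]
    simp only at hp ⊢
    refine ⟨⟨by omega, by omega, ?_⟩, by omega⟩
    push_cast
    nlinarith
  · rintro ⟨x, y⟩ hp
    rw [mem_filter, cpS_mem] at hp
    rw [cpS_mem]
    simp only at hp ⊢
    obtain ⟨⟨h1, h2, h3⟩, v, hv⟩ := hp
    obtain rfl : x = 7 * v - 2 * y := by omega
    obtain ⟨u, rfl⟩ : ∃ u, y = u + 2 * v := ⟨y - 2 * v, by ring⟩
    rw [show (-2 * (7 * v - 2 * (u + 2 * v)) + 3 * (u + 2 * v)) / 7 = u by omega,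
      show (7 * v - 2 * (u + 2 * v) + 2 * (u + 2 * v)) / 7 = v by omega]
    refine ⟨by omega, by omega, ?_⟩
    push_cast at h3
    nlinarith
  · rintro ⟨u, v⟩ hp
    ext <;> simp only <;> omega
  · rintro ⟨x, y⟩ hp
    rw [mem_filter, cpS_mem] at hp
    simp only at hp
    ext <;> simp only <;> omega
  · intro p hp; rfl

lemma cp_phi2 (M : ℕ) :
    ∑ p ∈ (cpS (7 * M)).filter (fun p => (7 : ℤ) ∣ p.1 - 2 * p.2), cpw p
    = ∑ p ∈ cpS M, cpw (-2 * p.1 - 3 * p.2, 2 * p.2 - p.1) := by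
  symm
  apply sum_nbij' (fun p : ℤ × ℤ => (-2 * p.1 - 3 * p.2, 2 * p.2 - p.1))
    (fun p : ℤ × ℤ => ((-2 * p.1 - 3 * p.2) / 7, (2 * p.2 - p.1) / 7))
  · rintro ⟨u, v⟩ hp
    rw [cpS_mem] at hp
    rw [mem_filter, cpS_mem]
    simp only at hp ⊢
    refine ⟨⟨by omega, by omega, ?_⟩, by omega⟩
    push_cast
    nlinarith
  · rintro ⟨x, y⟩ hp
    rw [mem_filter, cpS_mem] at hp
    rw [cpS_mem]
    simp only at hp ⊢
    obtain ⟨⟨h1, h2, h3⟩, v, hv⟩ := hp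
    obtain rfl : x = 7 * v + 2 * y := by omega
    obtain ⟨u, rfl⟩ : ∃ u, y = -2 * v - u := ⟨-2 * v - y, by ring⟩
    rw [show (-2 * (7 * v + 2 * (-2 * v - u)) - 3 * (-2 * v - u)) / 7 = u by omega,
      show (2 * (-2 * v - u) - (7 * v + 2 * (-2 * v - u))) / 7 = -v by omega]
    refine ⟨by omega, by omega, ?_⟩
    push_cast at h3
    nlinarith
  · rintro ⟨u, v⟩ hp
    ext <;> simp only <;> omega
  · rintro ⟨x, y⟩ hp
    rw [mem_filter, cpS_mem] at hp
    simp only at hp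
    ext <;> simp only <;> omega
  · intro p hp; rfl

lemma cp_w (u v : ℤ) (hu : u % 6 = 5) (hv : v % 2 = 1) :
    cpw (3 * v - 2 * u, u + 2 * v) + cpw (-2 * u - 3 * v, 2 * v - u) = -4 * cpw (u, v) := by
  have hu' : u % 12 = 5 ∨ u % 12 = 11 := by omega
  have hv' : v % 4 = 1 ∨ v % 4 = 3 := by omega
  simp only [cpw, cpε, cpδ]
  push_cast
  rcases hu' with hu' | hu' <;> rcases hv' with hv' | hv'
  · rw [if_neg (show ¬ (3 * v - 2 * u) % 12 = 11 by omega), if_neg (show ¬ (u + 2 * v) % 4 = 1 by omega),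
      if_pos (show (-2 * u - 3 * v) % 12 = 11 by omega), if_pos (show (2 * v - u) % 4 = 1 by omega),
      if_neg (show ¬ u % 12 = 11 by omega), if_pos hv']
    ring
  · rw [if_pos (show (3 * v - 2 * u) % 12 = 11 by omega), if_neg (show ¬ (u + 2 * v) % 4 = 1 by omega),
      if_neg (show ¬ (-2 * u - 3 * v) % 12 = 11 by omega), if_pos (show (2 * v - u) % 4 = 1 by omega),
      if_neg (show ¬ u % 12 = 11 by omega), if_neg (by omega)]
    ring
  · rw [if_neg (show ¬ (3 * v - 2 * u) % 12 = 11 by omega), if_pos (show (u + 2 * v) % 4 = 1 by omega),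
      if_pos (show (-2 * u - 3 * v) % 12 = 11 by omega), if_neg (show ¬ (2 * v - u) % 4 = 1 by omega),
      if_pos hu', if_pos hv']
    ring
  · rw [if_pos (show (3 * v - 2 * u) % 12 = 11 by omega), if_pos (show (u + 2 * v) % 4 = 1 by omega),
      if_neg (show ¬ (-2 * u - 3 * v) % 12 = 11 by omega), if_neg (show ¬ (2 * v - u) % 4 = 1 by omega),
      if_pos hu', if_neg (by omega)]
    ring

lemma cp_hecke (n : ℕ) : coeff (7 * n + 1) (CPF ^ 4) = 3 * coeff n (CPF ^ 4) := by
  have h1 := cp_F4 (7 * n + 1)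
  have h2 := cp_F4 n
  rw [show 24 * (7 * n + 1) + 4 = 7 * (24 * n + 4) by ring, cp_split, cp_phi1, cp_phi2,
    ← sum_add_distrib] at h1
  have h3 : ∑ p ∈ cpS (24 * n + 4), (cpw (3 * p.2 - 2 * p.1, p.1 + 2 * p.2) + cpw (-2 * p.1 - 3 * p.2, 2 * p.2 - p.1))
     = -4 * ∑ p ∈ cpS (24 * n + 4), cpw p := by
    rw [mul_sum]
    apply sum_congr rfl
    rintro ⟨u, v⟩ hp
    rw [cpS_mem] at hp
    exact cp_w u v hp.1 hp.2.1
  rw [h3, ← h2] at h1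
  have h7 : (7 : ZMod 7) = 0 := rfl
  linear_combination 4 * h1 + (-coeff (7 * n + 1) (CPF ^ 4) - 5 * coeff n (CPF ^ 4)) * h7

lemma cp_F3 (n j : ℕ) (hj : j = 2 ∨ j = 4 ∨ j = 5 ∨ j = 6) : coeff (7 * n + j) (CPF ^ 3) = 0 := by
  have h := cp_jac2 (7 * n + j) _ le_rfl
  rw [sum_eq_zero] at h
  · have h7 : (7 : ZMod 7) = 0 := rfl
    linear_combination 4 * h - coeff (7 * n + j) (CPF ^ 3) * h7
  · intro y hy
    rw [mem_filter] at hy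
    have hy2 := hy.2.2
    push_cast at hy2
    have h7 : (7 : ℤ) ∣ y := by
      have hm : y % 7 = 0 ∨ y % 7 = 1 ∨ y % 7 = 2 ∨ y % 7 = 3 ∨ y % 7 = 4 ∨ y % 7 = 5 ∨ y % 7 = 6 := by omega
      have hsq : y ^ 2 % 7 = (y % 7) ^ 2 % 7 := (Int.ModEq.pow 2 (Int.mod_modEq y 7)).symm
      rcases hm with h | h | h | h | h | h | h <;> rw [h] at hsq <;> norm_num at hsq <;> omega
    have h0 : (y : ZMod 7) = 0 := (ZMod.intCast_zmod_eq_zero_iff_dvd y 7).2 h7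
    rw [h0]; ring

theorem colouredPartitions_cong_mod7_49k3 (k n j : ℕ) (hj : j = 2 ∨ j = 4 ∨ j = 5 ∨ j = 6) :
    7 ∣ colouredPartitions (49 * k + 3) (49 * n + 7 * j + 1) := by
  rw [← ZMod.natCast_eq_zero_iff]
  set G : PowerSeries (ZMod 7) := mk fun n => (colouredPartitions (49 * k + 3) n : ZMod 7) with hG
  have h1 : G * CPF ^ (49 * k + 3) = 1 := cp_gen _
  have h2 : G * (CPF ^ (7 * k + 1)) ^ 7 = CPF ^ 4 := by
    have : G * (CPF ^ (7 * k + 1)) ^ 7 = (G * CPF ^ (49 * k + 3)) * CPF ^ 4 := by ring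
    rw [this, h1, one_mul]
  have h3 : cpD 1 G * CPF ^ (7 * k + 1) = C 3 * CPF ^ 4 := by
    rw [← cpD_mul 1 (by norm_num), h2]
    ext m
    rw [cpD, coeff_mk, cp_hecke, coeff_C_mul]
  have h4 : cpD 1 G * (CPF ^ k) ^ 7 = C 3 * CPF ^ 3 := by
    apply mul_right_cancel₀ cp_F0
    linear_combination h3
  have h5 : cpD j (cpD 1 G) * CPF ^ k = 0 := by
    rw [← cpD_mul j (by omega), h4]
    ext m
    rw [cpD, coeff_mk, coeff_C_mul, cp_F3 m j hj]
    simp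
  have h6 := (mul_eq_zero.1 h5).resolve_right (pow_ne_zero _ cp_F0)
  have h7 := congrArg (coeff n) h6
  simp only [cpD, coeff_mk, hG, map_zero] at h7
  rw [← h7]
  congr 2
  ring
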